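/- Let α be an irrational real number satisfying the Brjuno condition B, let δ > 0, β ∈ ℝ, and let g : B_δ → ℂ be a bounded holomorphic 1-periodic function with ∫₀¹ g(x) dx = 2πiβ. Then there exists a holomorphic, nowhere-vanishing 1-periodic function u₁ : B_δ → ℂ∖{0} such that u₁(θ) e^{g(θ)} = e^{2πiβ} u₁(θ+α) for all θ ∈ B_δ; moreover u₁ can be taken of the form u₁ = e^v with v holomorphic 1-periodic on B_δ. -/

import Mathlib

noncomputable def distNearestInt (x : ℝ) : ℝ := |x - round x|

noncomputable def GammaA (α : ℝ) (N : ℕ) : ℝ :=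
  sSup ((fun n : ℤ => (distNearestInt ((n : ℝ) * α))⁻¹) '' {n : ℤ | n ≠ 0 ∧ |n| ≤ (N : ℤ)})

noncomputable def GammaAB (α β : ℝ) (N : ℕ) : ℝ :=
  sSup ((fun n : ℤ => (distNearestInt ((n : ℝ) * α - β))⁻¹) '' {n : ℤ | |n| ≤ (N : ℤ)})

def IsNonRationalPair (α β : ℝ) : Prop := ∀ k m : ℤ, (k : ℝ) * α - β ≠ (m : ℝ)

def BrjunoCond (α : ℝ) : Prop :=
  Summable (fun N : ℕ => Real.log (GammaA α (N + 1)) / ((N : ℝ) + 1) ^ 2)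

def Strip (δ : ℝ) : Set ℂ := {θ : ℂ | |θ.im| < δ}

open Complex in
/-- The exponential `θ ↦ exp (2πinθ)`. -/
noncomputable def fourierMode (n : ℤ) (θ : ℂ) : ℂ := exp (2 * Real.pi * I * n * θ)

/-- The `n`-th Fourier coefficient of the restriction of `g` to the real line. -/
noncomputable def realFourierCoeff (g : ℂ → ℂ) (n : ℤ) : ℂ :=
  ∫ x in (0 : ℝ)..1, fourierMode (-n) x * g x

section FourierMode

open Complex

lemma fourierMode_add (n : ℤ) (θ η : ℂ) :
    fourierMode n (θ + η) = fourierMode n θ * fourierMode n η := by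
  simp only [fourierMode, ← exp_add]
  ring_nf

lemma fourierMode_one (n : ℤ) : fourierMode n 1 = 1 := by
  rw [fourierMode, mul_one, mul_comm]
  exact exp_int_mul_two_pi_mul_I n

lemma fourierMode_zero (θ : ℂ) : fourierMode 0 θ = 1 := by
  simp [fourierMode]

lemma fourierMode_neg_mul (n : ℤ) (θ : ℂ) : fourierMode (-n) θ * fourierMode n θ = 1 := by
  simp [fourierMode, ← exp_add]

lemma norm_fourierMode (n : ℤ) (θ : ℂ) :
    ‖fourierMode n θ‖ = Real.exp (-(2 * Real.pi * n * θ.im)) := by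
  rw [fourierMode, norm_exp]
  congr 1
  have : 2 * (Real.pi : ℂ) * I * n * θ = ((2 * Real.pi * n : ℝ) : ℂ) * (I * θ) := by
    push_cast; ring
  rw [this, re_ofReal_mul]
  simp

lemma norm_fourierMode_le (n : ℤ) {θ : ℂ} {r : ℝ} (h : |θ.im| ≤ r) :
    ‖fourierMode n θ‖ ≤ Real.exp (2 * Real.pi * r * |(n : ℝ)|) := by
  rw [norm_fourierMode, Real.exp_le_exp]
  have h1 : -((n : ℝ) * θ.im) ≤ |(n : ℝ)| * r :=
    (neg_le_abs _).trans (by rw [abs_mul]; gcongr)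
  nlinarith [Real.pi_pos]

lemma differentiable_fourierMode (n : ℤ) : Differentiable ℂ (fourierMode n) := by
  unfold fourierMode
  fun_prop

/-- The distance from `x` to the nearest integer bounds `|exp (2πix) - 1|` from below. -/
lemma distNearestInt_le_norm_exp_sub_one (x : ℝ) :
    distNearestInt x ≤ ‖exp (2 * Real.pi * I * x) - 1‖ := by
  have hx : exp (2 * Real.pi * I * x) = exp (I * (2 * Real.pi * (x - round x) : ℝ)) := by
    have : 2 * (Real.pi : ℂ) * I * x
        = I * (2 * Real.pi * (x - round x) : ℝ) + (round x : ℤ) * (2 * Real.pi * I) := by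
      push_cast; ring
    rw [this, exp_add, exp_int_mul_two_pi_mul_I, mul_one]
  have hr := abs_sub_round x
  rw [hx, norm_exp_I_mul_ofReal_sub_one, norm_mul, Real.norm_eq_abs, Real.norm_eq_abs,
    show 2 * Real.pi * (x - round x) / 2 = Real.pi * (x - round x) by ring]
  have habs : |Real.pi * (x - round x)| = Real.pi * |x - round x| := by
    rw [abs_mul, abs_of_pos Real.pi_pos]
  have hsin := Real.mul_abs_le_abs_sin (x := Real.pi * (x - round x))
    (by rw [habs]; nlinarith [Real.pi_pos])
  rw [habs, ← mul_assoc, div_mul_cancel₀ _ Real.pi_ne_zero] at hsin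
  rw [distNearestInt, abs_two]
  linarith [abs_nonneg (x - round x)]

lemma distNearestInt_le_norm_fourierMode_sub_one (n : ℤ) (α : ℝ) :
    distNearestInt (n * α) ≤ ‖fourierMode n α - 1‖ := by
  refine (distNearestInt_le_norm_exp_sub_one (n * α)).trans_eq ?_
  rw [fourierMode]
  push_cast
  ring_nf

end FourierMode

section Brjuno

lemma distNearestInt_pos {α : ℝ} (hα : Irrational α) {n : ℤ} (hn : n ≠ 0) :
    0 < distNearestInt (n * α) :=
  abs_pos.2 (sub_ne_zero.2 ((hα.intCast_mul hn).ne_int _))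

lemma bddAbove_GammaA (α : ℝ) (N : ℕ) :
    BddAbove ((fun n : ℤ => (distNearestInt ((n : ℝ) * α))⁻¹) ''
      {n : ℤ | n ≠ 0 ∧ |n| ≤ (N : ℤ)}) :=
  (((Set.finite_Icc (-(N : ℤ)) N).subset fun _ hn => abs_le.1 hn.2).image _).bddAbove

lemma inv_distNearestInt_le_GammaA (α : ℝ) {N : ℕ} {n : ℤ} (hn : n ≠ 0) (hN : |n| ≤ N) :
    (distNearestInt (n * α))⁻¹ ≤ GammaA α N :=
  le_csSup (bddAbove_GammaA α N) ⟨n, ⟨hn, hN⟩, rfl⟩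

lemma one_le_GammaA {α : ℝ} (hα : Irrational α) {N : ℕ} (hN : 1 ≤ N) : 1 ≤ GammaA α N := by
  refine le_trans ?_ (inv_distNearestInt_le_GammaA α one_ne_zero (by simpa using hN))
  refine (one_le_inv₀ (distNearestInt_pos hα one_ne_zero)).2 ?_
  exact (abs_sub_round _).trans (by norm_num)

lemma GammaA_mono {α : ℝ} {M N : ℕ} (hM : 1 ≤ M) (hMN : M ≤ N) : GammaA α M ≤ GammaA α N := by
  refine csSup_le_csSup (bddAbove_GammaA α N) ?_ (Set.image_mono ?_)
  · exact Set.Nonempty.image _ ⟨1, one_ne_zero, by simpa using hM⟩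
  · exact fun n hn => ⟨hn.1, hn.2.trans (by exact_mod_cast hMN)⟩

lemma log_GammaA_mono {α : ℝ} (hα : Irrational α) {M N : ℕ} (hM : 1 ≤ M) (hMN : M ≤ N) :
    Real.log (GammaA α M) ≤ Real.log (GammaA α N) :=
  Real.log_le_log (zero_lt_one.trans_le (one_le_GammaA hα hM)) (GammaA_mono hM hMN)

/-- Under the Brjuno condition, `log (GammaA α N)` grows sublinearly. -/
lemma BrjunoCond.exists_log_GammaA_le {α : ℝ} (hα : Irrational α) (hB : BrjunoCond α)
    {ε : ℝ} (hε : 0 < ε) :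
    ∃ K : ℝ, ∀ N : ℕ, 1 ≤ N → Real.log (GammaA α N) ≤ K + ε * N := by
  obtain ⟨M, hM⟩ := Metric.cauchySeq_iff.1 hB.hasSum.tendsto_sum_nat.cauchySeq (ε / 4)
    (by positivity)
  refine ⟨Real.log (GammaA α (M + 1)), fun N hN => ?_⟩
  have hN0 : (0 : ℝ) < N := by exact_mod_cast hN
  rcases le_total N M with hNM | hMN
  · have := log_GammaA_mono hα hN (hNM.trans M.le_succ)
    nlinarith
  have hlog : ∀ k, 1 ≤ k → 0 ≤ Real.log (GammaA α k) := fun k hk =>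
    Real.log_nonneg (one_le_GammaA hα hk)
  have hcau := hM (2 * N) (by lia) N hMN
  rw [Real.dist_eq, ← Finset.sum_Ico_eq_sub _ (by lia : N ≤ 2 * N)] at hcau
  have hsum : ∑ _k ∈ Finset.Ico N (2 * N), Real.log (GammaA α N) / (2 * N : ℝ) ^ 2
      ≤ ∑ k ∈ Finset.Ico N (2 * N), Real.log (GammaA α (k + 1)) / ((k : ℝ) + 1) ^ 2 := by
    refine Finset.sum_le_sum fun k hk => ?_
    rw [Finset.mem_Ico] at hk
    have hk2 : (k : ℝ) + 1 ≤ 2 * N := by exact_mod_cast hk.2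
    exact div_le_div₀ (hlog _ (by lia)) (log_GammaA_mono hα hN (by lia)) (by positivity)
      (by gcongr)
  rw [Finset.sum_const, Nat.card_Ico, show 2 * N - N = N by lia, nsmul_eq_mul] at hsum
  have hlt := hsum.trans_lt ((le_abs_self _).trans_lt hcau)
  rw [show (N : ℝ) * (Real.log (GammaA α N) / (2 * N) ^ 2) = Real.log (GammaA α N) / N / 4 by
    field_simp; ring] at hlt
  have : Real.log (GammaA α N) < ε * N := (div_lt_iff₀ hN0).1 (by linarith)
  linarith [hlog (M + 1) (by lia)]

/-- Under the Brjuno condition, the small divisors have subexponential inverses. -/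
lemma BrjunoCond.exists_inv_norm_le {α : ℝ} (hα : Irrational α) (hB : BrjunoCond α)
    {ε : ℝ} (hε : 0 < ε) :
    ∃ K : ℝ, ∀ n : ℤ, ‖fourierMode n α - 1‖⁻¹ ≤ K * Real.exp (ε * |(n : ℝ)|) := by
  obtain ⟨K, hK⟩ := hB.exists_log_GammaA_le hα hε
  refine ⟨Real.exp K, fun n => ?_⟩
  rcases eq_or_ne n 0 with rfl | hn
  · simp [fourierMode_zero, Real.exp_nonneg]
  have hn1 : 1 ≤ n.natAbs := Int.natAbs_pos.2 hn
  calc ‖fourierMode n α - 1‖⁻¹ ≤ (distNearestInt (n * α))⁻¹ :=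
        inv_anti₀ (distNearestInt_pos hα hn) (distNearestInt_le_norm_fourierMode_sub_one n α)
    _ ≤ GammaA α n.natAbs := inv_distNearestInt_le_GammaA α hn (by simp)
    _ = Real.exp (Real.log (GammaA α n.natAbs)) :=
        (Real.exp_log (zero_lt_one.trans_le (one_le_GammaA hα hn1))).symm
    _ ≤ Real.exp (K + ε * n.natAbs) := Real.exp_le_exp.2 (hK _ hn1)
    _ = Real.exp K * Real.exp (ε * |(n : ℝ)|) := by
        rw [Real.exp_add, Nat.cast_natAbs, Int.cast_abs]

end Brjuno

section Strip

open Complex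

lemma isOpen_Strip (δ : ℝ) : IsOpen (Strip δ) :=
  isOpen_lt (by fun_prop) continuous_const

lemma add_ofReal_mem_Strip {δ : ℝ} {θ : ℂ} (h : θ ∈ Strip δ) (a : ℝ) : θ + a ∈ Strip δ := by
  simpa [Strip] using h

lemma ofReal_add_mul_I_mem_Strip {δ y : ℝ} (hy : |y| < δ) (x : ℝ) : (x + y * I : ℂ) ∈ Strip δ := by
  simpa [Strip] using hy

/-- The integral over a period of a periodic holomorphic function does not depend on the height. -/
lemma integral_horizontal_eq {δ : ℝ} {F : ℂ → ℂ} (hF : DifferentiableOn ℂ F (Strip δ))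
    (hper : ∀ θ ∈ Strip δ, F (θ + 1) = F θ) {y : ℝ} (hy : |y| < δ) :
    ∫ x in (0 : ℝ)..1, F (x + y * I) = ∫ x in (0 : ℝ)..1, F x := by
  have hmem : ∀ t ∈ Set.uIcc 0 y, |t| < δ := fun t ht => by
    have := Set.abs_sub_left_of_mem_uIcc ht
    simp only [sub_zero] at this
    exact this.trans_lt hy
  have hrect := integral_boundary_rect_eq_zero_of_differentiableOn F 0 (1 + y * I) (hF.mono ?_)
  · have hside : ∫ t in (0 : ℝ)..y, F (1 + t * I) = ∫ t in (0 : ℝ)..y, F (0 + t * I) := by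
      refine intervalIntegral.integral_congr fun t ht => ?_
      have := hper (0 + t * I) (by simpa using ofReal_add_mul_I_mem_Strip (hmem t ht) 0)
      simpa [add_comm] using this
    simp [-smul_eq_mul] at hrect hside
    rw [hside] at hrect
    simp at hrect
    exact (sub_eq_zero.1 hrect).symm
  · intro z hz
    refine hmem z.im ?_
    simpa using hz.2

lemma periodic_fourierMode_mul {δ : ℝ} {g : ℂ → ℂ} (hper : ∀ θ ∈ Strip δ, g (θ + 1) = g θ)
    (n : ℤ) : ∀ θ ∈ Strip δ, fourierMode n (θ + 1) * g (θ + 1) = fourierMode n θ * g θ :=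
  fun θ hθ => by rw [hper θ hθ, fourierMode_add, fourierMode_one, mul_one]

lemma integral_fourierMode_mul_eq {δ : ℝ} {g : ℂ → ℂ} (hg : DifferentiableOn ℂ g (Strip δ))
    (hper : ∀ θ ∈ Strip δ, g (θ + 1) = g θ) {y : ℝ} (hy : |y| < δ) (n : ℤ) :
    ∫ x in (0 : ℝ)..1, fourierMode (-n) (x + y * I) * g (x + y * I) = realFourierCoeff g n :=
  integral_horizontal_eq (F := fun θ => fourierMode (-n) θ * g θ)
    ((differentiable_fourierMode (-n)).differentiableOn.mul hg)
    (periodic_fourierMode_mul hper (-n)) hy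

lemma norm_realFourierCoeff_le {δ C : ℝ} {g : ℂ → ℂ} (hg : DifferentiableOn ℂ g (Strip δ))
    (hper : ∀ θ ∈ Strip δ, g (θ + 1) = g θ) (hC : ∀ θ ∈ Strip δ, ‖g θ‖ ≤ C)
    {r : ℝ} (hr0 : 0 ≤ r) (hr : r < δ) (n : ℤ) :
    ‖realFourierCoeff g n‖ ≤ C * Real.exp (-(2 * Real.pi * r * |(n : ℝ)|)) := by
  obtain ⟨y, hy, hny⟩ : ∃ y : ℝ, |y| = r ∧ (n : ℝ) * y = -(r * |(n : ℝ)|) := by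
    rcases le_total 0 (n : ℝ) with h | h
    · exact ⟨-r, by rw [abs_neg, abs_of_nonneg hr0], by rw [abs_of_nonneg h]; ring⟩
    · exact ⟨r, abs_of_nonneg hr0, by rw [abs_of_nonpos h]; ring⟩
  have hyδ : |y| < δ := hy ▸ hr
  rw [← integral_fourierMode_mul_eq hg hper hyδ]
  refine (intervalIntegral.norm_integral_le_of_norm_le_const
    (C := C * Real.exp (-(2 * Real.pi * r * |(n : ℝ)|))) fun x _ => ?_).trans (by simp)
  have hmode : ‖fourierMode (-n) (x + y * I)‖ = Real.exp (-(2 * Real.pi * r * |(n : ℝ)|)) := by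
    rw [norm_fourierMode]
    congr 1
    simp
    linear_combination 2 * Real.pi * hny
  rw [norm_mul, hmode, mul_comm]
  gcongr
  exact hC _ (ofReal_add_mul_I_mem_Strip hyδ x)

lemma summable_exp_neg_mul_abs_int {a : ℝ} (ha : 0 < a) :
    Summable fun n : ℤ => Real.exp (-(a * |(n : ℝ)|)) := by
  have h : Summable fun n : ℕ => Real.exp (-(a * (n : ℝ))) := by
    simpa [mul_comm] using Real.summable_exp_nat_mul_iff.2 (neg_neg_of_pos ha)
  exact Summable.of_nat_of_neg (by simpa using h) (by simpa using h)

/-- A bounded periodic holomorphic function on a strip is the sum of its Fourier series. -/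
lemma hasSum_realFourierCoeff {δ C : ℝ} {g : ℂ → ℂ} (hg : DifferentiableOn ℂ g (Strip δ))
    (hper : ∀ θ ∈ Strip δ, g (θ + 1) = g θ) (hC : ∀ θ ∈ Strip δ, ‖g θ‖ ≤ C)
    {θ : ℂ} (hθ : θ ∈ Strip δ) :
    HasSum (fun n : ℤ => realFourierCoeff g n * fourierMode n θ) (g θ) := by
  have : Fact ((0 : ℝ) < 1) := ⟨zero_lt_one⟩
  have hy : |θ.im| < δ := hθ
  obtain ⟨r, hyr, hrδ⟩ := exists_between hy
  have hp : Function.Periodic (fun x : ℝ => g (x + θ.im * I)) 1 := fun x => by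
    refine Eq.trans (congrArg g ?_) (hper _ (ofReal_add_mul_I_mem_Strip hy x))
    push_cast
    ring
  have hcont : Continuous fun x : ℝ => g (x + θ.im * I) :=
    hg.continuousOn.comp_continuous (by fun_prop) (ofReal_add_mul_I_mem_Strip hy)
  let f : C(AddCircle (1 : ℝ), ℂ) := ⟨hp.lift, continuous_coinduced_dom.2 hcont⟩
  have hfx : ∀ x : ℝ, f x = g (x + θ.im * I) := fun x => hp.lift_coe x
  have hmode : ∀ (n : ℤ) (x : ℝ), fourierMode n (x + θ.im * I)
      = fourierMode n (θ.im * I) * fourier n (x : AddCircle (1 : ℝ)) := fun n x => by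
    rw [fourierMode_add, mul_comm, fourier_coe_apply, fourierMode, fourierMode]
    simp
  have hcoeff : ∀ n : ℤ, fourierCoeff f n
      = realFourierCoeff g n * fourierMode n (θ.im * I) := fun n => by
    rw [fourierCoeff_eq_intervalIntegral f n 0, ← integral_fourierMode_mul_eq hg hper hy,
      ← intervalIntegral.integral_mul_const]
    simp only [div_one, one_smul, zero_add, smul_eq_mul]
    refine intervalIntegral.integral_congr fun x _ => ?_
    simp only [hfx, hmode]
    linear_combination (-(fourier (-n) (x : AddCircle (1 : ℝ)) * g (x + θ.im * I))) *
      fourierMode_neg_mul n (θ.im * I)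
  have hsum : Summable (fourierCoeff f) := by
    refine Summable.of_norm_bounded
      ((summable_exp_neg_mul_abs_int (a := 2 * Real.pi * (r - |θ.im|))
        (mul_pos Real.two_pi_pos (sub_pos.2 hyr))).mul_left C) fun n => ?_
    rw [hcoeff, norm_mul]
    have h1 := norm_realFourierCoeff_le hg hper hC ((abs_nonneg _).trans hyr.le) hrδ n
    have h2 := norm_fourierMode_le n (θ := θ.im * I) (r := |θ.im|) (by simp)
    refine (mul_le_mul h1 h2 (norm_nonneg _) ((norm_nonneg _).trans h1)).trans_eq ?_
    rw [mul_assoc, ← Real.exp_add]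
    ring_nf
  have key := has_pointwise_sum_fourier_series_of_summable hsum (θ.re : AddCircle (1 : ℝ))
  rw [hfx, re_add_im] at key
  refine key.congr_fun fun n => ?_
  rw [hcoeff, smul_eq_mul, mul_assoc, ← hmode, re_add_im]

end Strip

section Cohomological

/-- The terms of the Fourier series of the solution of `v (θ + α) - v θ = g θ - ∫ g`. The term
`n = 0` vanishes since its denominator does. -/
noncomputable def cohomologicalTerm (α : ℝ) (g : ℂ → ℂ) (n : ℤ) (θ : ℂ) : ℂ :=
  realFourierCoeff g n / (fourierMode n α - 1) * fourierMode n θ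

variable {α δ C : ℝ} {g : ℂ → ℂ}

lemma exists_summable_bound_cohomologicalTerm (hα : Irrational α) (hB : BrjunoCond α)
    (hg : DifferentiableOn ℂ g (Strip δ)) (hper : ∀ θ ∈ Strip δ, g (θ + 1) = g θ)
    (hC : ∀ θ ∈ Strip δ, ‖g θ‖ ≤ C) {r : ℝ} (hr0 : 0 ≤ r) (hr : r < δ) :
    ∃ u : ℤ → ℝ, Summable u ∧
      ∀ (n : ℤ) (θ : ℂ), θ ∈ Strip r → ‖cohomologicalTerm α g n θ‖ ≤ u n := by
  obtain ⟨s, hrs, hsδ⟩ := exists_between hr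
  have hε : 0 < Real.pi * (s - r) := mul_pos Real.pi_pos (sub_pos.2 hrs)
  obtain ⟨K, hK⟩ := hB.exists_inv_norm_le hα hε
  refine ⟨fun n => C * K * Real.exp (-(Real.pi * (s - r) * |(n : ℝ)|)),
    (summable_exp_neg_mul_abs_int hε).mul_left _, fun n θ hθ => ?_⟩
  have h1 := norm_realFourierCoeff_le hg hper hC (hr0.trans hrs.le) hsδ n
  have h2 := norm_fourierMode_le n (θ := θ) (r := r) (le_of_lt hθ)
  have h3 := mul_le_mul h1 (hK n) (by positivity) ((norm_nonneg _).trans h1)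
  rw [cohomologicalTerm, norm_mul, norm_div, div_eq_mul_inv]
  refine (mul_le_mul h3 h2 (norm_nonneg _) (le_trans (by positivity) h3)).trans_eq ?_
  have hexp : Real.exp (-(Real.pi * (s - r) * |(n : ℝ)|))
      = Real.exp (-(2 * Real.pi * s * |(n : ℝ)|)) * Real.exp (Real.pi * (s - r) * |(n : ℝ)|)
        * Real.exp (2 * Real.pi * r * |(n : ℝ)|) := by
    rw [← Real.exp_add, ← Real.exp_add]
    ring_nf
  simp only [hexp]
  ring

lemma cohomologicalTerm_add_sub (hα : Irrational α) (n : ℤ) (θ : ℂ) :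
    cohomologicalTerm α g n (θ + α) - cohomologicalTerm α g n θ
      = realFourierCoeff g n * fourierMode n θ - if n = 0 then realFourierCoeff g 0 else 0 := by
  rcases eq_or_ne n 0 with rfl | hn
  · simp [cohomologicalTerm, fourierMode_zero]
  have hne : fourierMode n α - 1 ≠ 0 := norm_pos_iff.1
    ((distNearestInt_pos hα hn).trans_le (distNearestInt_le_norm_fourierMode_sub_one n α))
  rw [if_neg hn, cohomologicalTerm, cohomologicalTerm, fourierMode_add]
  field_simp
  ring

/-- Solution of the additive cohomological equation over a Brjuno rotation, without loss of
strip width. -/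
lemma exists_cohomological_solution (hα : Irrational α) (hB : BrjunoCond α)
    (hg : DifferentiableOn ℂ g (Strip δ)) (hper : ∀ θ ∈ Strip δ, g (θ + 1) = g θ)
    (hC : ∀ θ ∈ Strip δ, ‖g θ‖ ≤ C) :
    ∃ v : ℂ → ℂ, DifferentiableOn ℂ v (Strip δ) ∧ (∀ θ, v (θ + 1) = v θ) ∧
      ∀ θ ∈ Strip δ, v (θ + α) - v θ = g θ - ∫ x in (0 : ℝ)..1, g x := by
  have hbound : ∀ θ ∈ Strip δ, ∃ r, θ ∈ Strip r ∧ ∃ u : ℤ → ℝ, Summable u ∧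
      ∀ (n : ℤ) (η : ℂ), η ∈ Strip r → ‖cohomologicalTerm α g n η‖ ≤ u n := fun θ hθ => by
    obtain ⟨r, hθr, hr⟩ := exists_between (show |θ.im| < δ from hθ)
    exact ⟨r, hθr, exists_summable_bound_cohomologicalTerm hα hB hg hper hC
      ((abs_nonneg _).trans hθr.le) hr⟩
  refine ⟨fun θ => ∑' n, cohomologicalTerm α g n θ, fun θ hθ => ?_, fun θ => ?_, fun θ hθ => ?_⟩
  · obtain ⟨r, hθr, u, hu, hle⟩ := hbound θ hθ
    exact ((Complex.differentiableOn_tsum_of_summable_norm hu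
      (fun n => ((differentiable_fourierMode n).const_mul _).differentiableOn)
      (isOpen_Strip r) hle).differentiableAt ((isOpen_Strip r).mem_nhds hθr)).differentiableWithinAt
  · simp only [cohomologicalTerm, fourierMode_add, fourierMode_one, mul_one]
  · have hsum : ∀ η ∈ Strip δ, Summable fun n => cohomologicalTerm α g n η := fun η hη => by
      obtain ⟨r, hηr, u, hu, hle⟩ := hbound η hη
      exact Summable.of_norm_bounded hu fun n => hle n η hηr
    have hzero : realFourierCoeff g 0 = ∫ x in (0 : ℝ)..1, g x := by
      simp [realFourierCoeff, fourierMode_zero]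
    rw [← (hsum _ (add_ofReal_mem_Strip hθ α)).tsum_sub (hsum θ hθ), ← hzero]
    simp only [cohomologicalTerm_add_sub hα]
    exact ((hasSum_realFourierCoeff hg hper hC hθ).sub
      (hasSum_ite_eq (0 : ℤ) (realFourierCoeff g 0))).tsum_eq

end Cohomological

/-- existence of a nowhere-vanishing periodic holomorphic solution
u₁ = e^v of the multiplicative cohomological equation u₁(θ) e^{g(θ)} = e^{2πiβ} u₁(θ+α). -/
theorem stmt_15 (α : ℝ) (hα : Irrational α) (hB : BrjunoCond α)
    (δ : ℝ) (hδ : 0 < δ) (β : ℝ) (g : ℂ → ℂ)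
    (hg : DifferentiableOn ℂ g (Strip δ))
    (hper : ∀ θ ∈ Strip δ, g (θ + 1) = g θ)
    (hbd : ∃ C : ℝ, ∀ θ ∈ Strip δ, ‖g θ‖ ≤ C)
    (hmean : (∫ x in (0:ℝ)..1, g x) = 2 * Real.pi * Complex.I * β) :
    ∃ u₁ v : ℂ → ℂ,
      DifferentiableOn ℂ u₁ (Strip δ) ∧
      (∀ θ ∈ Strip δ, u₁ (θ + 1) = u₁ θ) ∧
      (∀ θ ∈ Strip δ, u₁ θ ≠ 0) ∧
      DifferentiableOn ℂ v (Strip δ) ∧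
      (∀ θ ∈ Strip δ, v (θ + 1) = v θ) ∧
      (∀ θ ∈ Strip δ, u₁ θ = Complex.exp (v θ)) ∧
      ∀ θ ∈ Strip δ,
        u₁ θ * Complex.exp (g θ) =
          Complex.exp (2 * Real.pi * Complex.I * β) * u₁ (θ + α) := by
  obtain ⟨C, hC⟩ := hbd
  obtain ⟨v, hv, hvper, hveq⟩ := exists_cohomological_solution hα hB hg hper hC
  refine ⟨fun θ => Complex.exp (v θ), v, hv.cexp, fun θ _ => by simp only [hvper],
    fun _ _ => Complex.exp_ne_zero _, hv, fun θ _ => hvper θ, fun _ _ => rfl, fun θ hθ => ?_⟩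
  rw [← Complex.exp_add, ← Complex.exp_add]
  congr 1
  linear_combination hmean - hveq θ hθ
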